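/- Let f : ℝ^D → ℝ^D be L-Lipschitz with ‖f‖ ≤ M everywhere, let φ be the flow of y' = f(y), and let f_s, φ_s denote s-th components. Then for any z ∈ ℝ^D, time t, step h > 0, integer k ≥ 1 with weights w_j = 6 j² / (k(k+1)(2k+1)), the deterministic symmetric finite-difference approximation satisfies |∑_{j=1}^k w_j (φ_s(z, t + j h) − φ_s(z, t − j h)) / (2 j h) − f_s(φ(z, t))| ≤ (3/2) L M k h. -/

import Mathlib

/-! Along an integral curve `y` of `f` the velocity `y' = f ∘ y` is `L M`-Lipschitz in time. The
symmetric error `y (t + a) - y (t - a) - 2 a y' t` vanishes at `a = 0`, and its derivative in `a`,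
`(y' (t + a) - y' t) + (y' (t - a) - y' t)`, has norm at most `2 L M a`; so the error has norm at
most `L M a²`, and the quotient with step `a` lies in the ball of radius `L M a / 2` about
`f (y t)`. The weights are nonnegative with sum one, so convexity keeps the average in the ball for
the largest step `a = k h`. -/

open Metric
open scoped NNReal

/-- The symmetric difference quotient `(y (t + a) - y (t - a)) / (2 a)` of a curve `y` at `t` with
step `a`, approximating the derivative of `y` at `t`. At `a = 0` it takes the junk value `0`. -/
noncomputable def centralDiffQuotient {E : Type*} [AddCommGroup E] [Module ℝ E]
    (y : ℝ → E) (t a : ℝ) : E :=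
  (2 * a)⁻¹ • (y (t + a) - y (t - a))

/-- The weight `w_j = 6 j² / (k (k + 1) (2 k + 1))` of the step `j h` in an average over
`1 ≤ j ≤ k`. -/
noncomputable def sqWeight (k j : ℕ) : ℝ :=
  6 * (j : ℝ) ^ 2 / ((k : ℝ) * ((k : ℝ) + 1) * (2 * (k : ℝ) + 1))

theorem centralDiffQuotient_apply {ι : Type*} (y : ℝ → EuclideanSpace ℝ ι) (t a : ℝ) (s : ι) :
    centralDiffQuotient y t a s = (y (t + a) s - y (t - a) s) / (2 * a) :=
  inv_mul_eq_div _ _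

theorem sqWeight_nonneg (k j : ℕ) : 0 ≤ sqWeight k j := by
  unfold sqWeight
  positivity

theorem sum_Icc_six_mul_sq {R : Type*} [CommSemiring R] (k : ℕ) :
    ∑ j ∈ Finset.Icc 1 k, 6 * (j : R) ^ 2 = (k : R) * (k + 1) * (2 * k + 1) := by
  induction k with
  | zero => simp
  | succ n ih =>
    rw [Finset.sum_Icc_succ_top (by lia), ih]
    push_cast
    ring

theorem sum_sqWeight {k : ℕ} (hk : 1 ≤ k) : ∑ j ∈ Finset.Icc 1 k, sqWeight k j = 1 := by
  simp only [sqWeight]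
  rw [← Finset.sum_div, sum_Icc_six_mul_sq]
  exact div_self (by positivity)

section NormedSpace

variable {E : Type*} [NormedAddCommGroup E] [NormedSpace ℝ E] {C : ℝ≥0} {y y' : ℝ → E}

theorem norm_sub_sub_smul_deriv_le_of_lipschitzWith (hy : ∀ u, HasDerivAt y (y' u) u)
    (hy' : LipschitzWith C y') (t : ℝ) {a : ℝ} (ha : 0 ≤ a) :
    ‖y (t + a) - y (t - a) - (2 * a) • y' t‖ ≤ C * a ^ 2 := by
  have hderiv (x : ℝ) : HasDerivAt (fun b ↦ y (t + b) - y (t - b) - (2 * b) • y' t)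
      ((y' (t + x) - y' t) + (y' (t - x) - y' t)) x := by
    have hdiff := ((hy (t + x)).comp_const_add t x).sub ((hy (t - x)).comp_const_sub t x)
    have hlin := ((hasDerivAt_id x).const_mul 2).smul_const (y' t)
    exact (hdiff.sub hlin).congr_deriv (by module)
  have hbound (x : ℝ) (hx : 0 ≤ x) :
      ‖(y' (t + x) - y' t) + (y' (t - x) - y' t)‖ ≤ C * (2 * x) :=
    calc ‖(y' (t + x) - y' t) + (y' (t - x) - y' t)‖
      _ ≤ ‖y' (t + x) - y' t‖ + ‖y' (t - x) - y' t‖ := norm_add_le _ _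
      _ ≤ C * ‖t + x - t‖ + C * ‖t - x - t‖ :=
        add_le_add (hy'.norm_sub_le _ _) (hy'.norm_sub_le _ _)
      _ = C * (2 * x) := by
        rw [add_sub_cancel_left, sub_sub_cancel_left, norm_neg, Real.norm_of_nonneg hx]
        ring
  have hsq (x : ℝ) : HasDerivAt (fun b : ℝ ↦ C * b ^ 2) (C * (2 * x)) x := by
    simpa using (hasDerivAt_pow 2 x).const_mul (C : ℝ)
  exact image_norm_le_of_norm_deriv_right_le_deriv_boundary
    (fun x _ ↦ (hderiv x).continuousAt.continuousWithinAt)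
    (fun x _ ↦ (hderiv x).hasDerivWithinAt) (by simp) hsq
    (fun x hx ↦ hbound x hx.1) (Set.right_mem_Icc.2 ha)

theorem norm_centralDiffQuotient_sub_deriv_le_of_lipschitzWith (hy : ∀ u, HasDerivAt y (y' u) u)
    (hy' : LipschitzWith C y') (t : ℝ) {a : ℝ} (ha : 0 < a) :
    ‖centralDiffQuotient y t a - y' t‖ ≤ C * a / 2 := by
  have h2a : 0 < 2 * a := by positivity
  calc ‖centralDiffQuotient y t a - y' t‖
    _ = (2 * a)⁻¹ * ‖y (t + a) - y (t - a) - (2 * a) • y' t‖ := by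
      rw [← norm_smul_of_nonneg (inv_nonneg.2 h2a.le), smul_sub, inv_smul_smul₀ h2a.ne',
        centralDiffQuotient]
    _ ≤ (2 * a)⁻¹ * (C * a ^ 2) := by
      gcongr
      exact norm_sub_sub_smul_deriv_le_of_lipschitzWith hy hy' t ha.le
    _ = C * a / 2 := by field_simp

theorem norm_sum_smul_centralDiffQuotient_sub_deriv_le_of_lipschitzWith {ι : Type*} {I : Finset ι}
    {w a : ι → ℝ} {r : ℝ} (hw : ∀ i ∈ I, 0 ≤ w i) (hw_sum : ∑ i ∈ I, w i = 1)
    (ha : ∀ i ∈ I, 0 < a i) (har : ∀ i ∈ I, a i ≤ r)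
    (hy : ∀ u, HasDerivAt y (y' u) u) (hy' : LipschitzWith C y') (t : ℝ) :
    ‖∑ i ∈ I, w i • centralDiffQuotient y t (a i) - y' t‖ ≤ C * r / 2 := by
  rw [← mem_closedBall_iff_norm]
  refine (convex_closedBall (y' t) (C * r / 2)).sum_mem hw hw_sum fun i hi ↦ ?_
  rw [mem_closedBall_iff_norm]
  have hradius : C * a i / 2 ≤ C * r / 2 := by
    gcongr
    exact har i hi
  exact (norm_centralDiffQuotient_sub_deriv_le_of_lipschitzWith hy hy' t (ha i hi)).trans hradius

variable {L M : ℝ≥0} {f : E → E}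

theorem lipschitzWith_comp_of_isIntegralCurve (hf : LipschitzWith L f)
    (hfM : ∀ u, ‖f (y u)‖ ≤ M) (hy : IsIntegralCurve y fun _ ↦ f) :
    LipschitzWith (L * M) fun u ↦ f (y u) :=
  hf.comp <| lipschitzWith_of_nnnorm_deriv_le (fun u ↦ (hy u).differentiableAt) fun u ↦
    (hy u).deriv ▸ hfM u

theorem stmt_6_general (hf : LipschitzWith L f) (hfM : ∀ u, ‖f (y u)‖ ≤ M)
    (hy : IsIntegralCurve y fun _ ↦ f) {h : ℝ} (hh : 0 < h) {k : ℕ} (hk : 1 ≤ k) (t : ℝ) :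
    ‖∑ j ∈ Finset.Icc 1 k, sqWeight k j • centralDiffQuotient y t (j * h) - f (y t)‖ ≤
      L * M * (k * h) / 2 := by
  refine norm_sum_smul_centralDiffQuotient_sub_deriv_le_of_lipschitzWith (C := L * M)
    (fun j _ ↦ sqWeight_nonneg k j) (sum_sqWeight hk) (fun j hj ↦ ?_) (fun j hj ↦ ?_) hy
    (lipschitzWith_comp_of_isIntegralCurve hf hfM hy) t
  · have : 1 ≤ j := (Finset.mem_Icc.1 hj).1
    positivity
  · have : j ≤ k := (Finset.mem_Icc.1 hj).2
    gcongr

end NormedSpace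

/-- Deterministic bias bound for the weighted symmetric finite-difference approximation of
the derivative of the flow of an `L`-Lipschitz, `M`-bounded vector field:
`|∑_{j=1}^k w_j (φ_s(z, t+jh) − φ_s(z, t−jh))/(2jh) − f_s(φ(z,t))| ≤ (3/2) L M k h`. -/
theorem stmt_6 {D : ℕ} (L M h : ℝ) (hL : 0 < L) (hM : 0 < M) (hh : 0 < h)
    (f : EuclideanSpace ℝ (Fin D) → EuclideanSpace ℝ (Fin D))
    (hf : LipschitzWith (Real.toNNReal L) f) (hfM : ∀ z, ‖f z‖ ≤ M)
    (φ : EuclideanSpace ℝ (Fin D) → ℝ → EuclideanSpace ℝ (Fin D))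
    (hflow : ∀ z t, HasDerivAt (φ z) (f (φ z t)) t)
    (hinit : ∀ z, φ z 0 = z)
    (k : ℕ) (hk : 1 ≤ k) (z : EuclideanSpace ℝ (Fin D)) (t : ℝ) (s : Fin D) :
    |∑ j ∈ Finset.Icc 1 k,
        (6 * (j : ℝ) ^ 2 / ((k : ℝ) * ((k : ℝ) + 1) * (2 * (k : ℝ) + 1))) *
          ((φ z (t + (j : ℝ) * h) s - φ z (t - (j : ℝ) * h) s) / (2 * (j : ℝ) * h))
      - f (φ z t) s| ≤ (3 / 2) * L * M * (k : ℝ) * h := by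
  lift L to ℝ≥0 using hL.le
  lift M to ℝ≥0 using hM.le
  rw [Real.toNNReal_coe] at hf
  have hbound := (PiLp.norm_apply_le _ s).trans
    (stmt_6_general hf (fun u ↦ hfM (φ z u)) (hflow z) hh hk t)
  simp only [PiLp.sub_apply, WithLp.ofLp_sum, Finset.sum_apply, PiLp.smul_apply, smul_eq_mul,
    Real.norm_eq_abs, centralDiffQuotient_apply, sqWeight, ← mul_assoc] at hbound
  have : 0 ≤ (L : ℝ) * M * k * h := by positivity
  linarith
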